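/- The series ∑_{n=1}^∞ ζ(2n+1)/((2n+1)(n+1)·4^n) equals -12·log A + 2 - γ + (7/3)·log 2, where A is the Glaisher-Kinkelin constant and γ is the Euler-Mascheroni constant. -/

import Mathlib

open Real

/-!
For `re s > 1` and `|x| < 1`, expanding every term by the binomial series gives
`∑ₖ (k + 1 - x) ^ (-s) = ∑ₙ multichoose s n * ζ(s + n) * x ^ n`. At `x = ±1 / 2` the left side is
elementary in `ζ(s)` and `2 ^ s`, so the sum of the terms of even degree is known in closed form.
Without the terms of degree `0` and `2` that sum is holomorphic for `re s > -3`, and the closed form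
persists there by the identity theorem. At `s = -1` the coefficient `multichoose s (m + 2)` vanishes
with derivative `-1 / ((m + 1) * (m + 2))`, so differentiating there turns the term of degree
`2 * n + 4` into `-1 / 8` times the `n`-th term of the series, while the closed form contributes
`ζ'(-1)`, `γ` (from the pole of `ζ(s + 2)`) and `log 2`.
-/

section Multichoose

theorem succ_mul_multichoose_succ {R : Type*} [CommRing R] [BinomialRing R] (r : R) (n : ℕ) :
    ((n : R) + 1) * Ring.multichoose r (n + 1) = r * Ring.multichoose (r + 1) n := by
  have asc (a : R) (m : ℕ) :
      (m.factorial : R) * Ring.multichoose a m = (ascPochhammer R m).eval a := by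
    rw [← nsmul_eq_mul, Ring.factorial_nsmul_multichoose_eq_ascPochhammer,
      Polynomial.ascPochhammer_smeval_eq_eval]
  have := BinomialRing.toIsAddTorsionFree (R := R)
  rw [← nsmul_right_inj n.factorial_ne_zero, nsmul_eq_mul, nsmul_eq_mul]
  calc (n.factorial : R) * ((n + 1) * Ring.multichoose r (n + 1))
      = ((n + 1).factorial : R) * Ring.multichoose r (n + 1) := by
        rw [Nat.factorial_succ]; push_cast; ring
    _ = r * (ascPochhammer R n).eval (r + 1) := by rw [asc]; simp [ascPochhammer_succ_left]
    _ = n.factorial * (r * Ring.multichoose (r + 1) n) := by rw [← asc]; ring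

theorem multichoose_succ_eq_mul_div {K : Type*} [Field K] [CharZero K] (r : K) (n : ℕ) :
    Ring.multichoose r (n + 1) = r * Ring.multichoose (r + 1) n / (n + 1) := by
  rw [eq_div_iff (Nat.cast_add_one_ne_zero n), ← succ_mul_multichoose_succ, mul_comm]

theorem differentiable_multichoose {𝕜 : Type*} [NontriviallyNormedField 𝕜] [CharZero 𝕜]
    (n : ℕ) : Differentiable 𝕜 (fun s : 𝕜 ↦ Ring.multichoose s n) := by
  induction n with
  | zero => simp
  | succ n ih =>
    simp only [multichoose_succ_eq_mul_div]
    have hshift : Differentiable 𝕜 fun s : 𝕜 ↦ Ring.multichoose (s + 1) n :=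
      ih.comp (f := (· + 1)) (by fun_prop)
    exact (differentiable_id.mul hshift).div_const _

theorem norm_multichoose_le {s : ℂ} {R : ℝ} (hs : ‖s‖ ≤ R) (n : ℕ) :
    ‖Ring.multichoose s n‖ ≤ Ring.multichoose R n := by
  induction n generalizing s R with
  | zero => simp
  | succ n ih =>
    have hs' : ‖s + 1‖ ≤ R + 1 := (norm_add_le s 1).trans (by simpa using hs)
    have hn : ‖(n + 1 : ℂ)‖ = n + 1 := by exact_mod_cast Complex.norm_natCast (n + 1)
    rw [multichoose_succ_eq_mul_div, multichoose_succ_eq_mul_div, norm_div, norm_mul, hn]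
    gcongr
    · exact (norm_nonneg s).trans hs
    · exact ih hs'

theorem multichoose_nonneg {a : ℝ} (ha : 0 ≤ a) (n : ℕ) : 0 ≤ Ring.multichoose a n :=
  (norm_nonneg _).trans (norm_multichoose_le (s := 0) (by simpa using ha) n)

theorem hasDerivAt_multichoose_add_two_neg_one {𝕜 : Type*} [NontriviallyNormedField 𝕜]
    [CharZero 𝕜] (n : ℕ) :
    HasDerivAt (fun s : 𝕜 ↦ Ring.multichoose s (n + 2)) (-1 / ((n + 1) * (n + 2))) (-1) := by
  have factor (s : 𝕜) : Ring.multichoose s (n + 2) =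
      (s + 1) * (s * Ring.multichoose (s + 2) n / ((n + 1) * (n + 2))) := by
    rw [multichoose_succ_eq_mul_div, multichoose_succ_eq_mul_div,
      show s + 1 + 1 = s + 2 by ring]
    push_cast
    rw [show (n : 𝕜) + 1 + 1 = n + 2 by ring, div_mul_eq_div_div]
    ring
  simp only [factor]
  have hd : Differentiable 𝕜 fun s : 𝕜 ↦ s * Ring.multichoose (s + 2) n / ((n + 1) * (n + 2)) := by
    have hshift : Differentiable 𝕜 fun s : 𝕜 ↦ Ring.multichoose (s + 2) n :=
      (differentiable_multichoose (𝕜 := 𝕜) n).comp (f := (· + 2)) (by fun_prop)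
    exact (differentiable_id.mul hshift).div_const _
  refine (((hasDerivAt_id (-1 : 𝕜)).add_const 1).mul (hd (-1)).hasDerivAt).congr_deriv ?_
  have : (-1 : 𝕜) + 2 = 1 := by ring
  simp [this]

theorem multichoose_neg_one_add_two {R : Type*} [CommRing R] [BinomialRing R] (n : ℕ) :
    Ring.multichoose (-1 : R) (n + 2) = 0 := by
  have := BinomialRing.toIsAddTorsionFree (R := R)
  rw [← nsmul_right_inj (n + 1).succ_ne_zero, nsmul_eq_mul, nsmul_zero]
  simpa using succ_mul_multichoose_succ (-1 : R) (n + 1)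

theorem hasSum_multichoose_mul_pow (s : ℂ) {z : ℂ} (hz : ‖z‖ < 1) :
    HasSum (fun n ↦ Ring.multichoose s n * z ^ n) ((1 - z) ^ (-s)) := by
  have := (Complex.one_div_one_sub_cpow_hasFPowerSeriesOnBall_zero s).hasSum
    (y := z) (by simpa [← ofReal_norm] using hz)
  simpa [Ring.multichoose_eq, Complex.cpow_neg, FormalMultilinearSeries.ofScalars, mul_comm]
    using this

theorem summable_multichoose_mul_pow (a : ℝ) {x : ℝ} (hx : |x| < 1) :
    Summable fun n ↦ Ring.multichoose a n * x ^ n := by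
  have := ((Real.one_div_one_sub_rpow_hasFPowerSeriesOnBall_zero a).hasSum
    (y := x) (by simpa [← ofReal_norm] using hx)).summable
  simpa [Ring.multichoose_eq, FormalMultilinearSeries.ofScalars, mul_comm] using this

end Multichoose

section ZetaSeries

theorem hasSum_nat_add_one_cpow_neg {s : ℂ} (hs : 1 < s.re) :
    HasSum (fun k : ℕ ↦ ((k : ℂ) + 1) ^ (-s)) (riemannZeta s) := by
  have h : Summable fun k : ℕ ↦ ((k : ℂ) + 1) ^ (-s) := by
    simpa [Complex.cpow_neg] using
      (summable_nat_add_iff 1).2 (Complex.summable_one_div_nat_cpow.2 hs)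
  simpa [Complex.cpow_neg, zeta_eq_tsum_one_div_nat_add_one_cpow hs] using h.hasSum

theorem ne_one_of_one_lt_re {s : ℂ} (hs : 1 < s.re) : s ≠ 1 :=
  ne_of_apply_ne Complex.re hs.ne'

theorem norm_nat_add_one_cpow (k : ℕ) (s : ℂ) : ‖((k : ℂ) + 1) ^ s‖ = ((k : ℝ) + 1) ^ s.re := by
  exact_mod_cast Complex.norm_natCast_cpow_of_pos k.succ_pos s

theorem summable_nat_add_one_rpow_neg {σ : ℝ} (hσ : 1 < σ) :
    Summable fun k : ℕ ↦ ((k : ℝ) + 1) ^ (-σ) := by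
  simpa using (summable_nat_add_iff 1).2 (Real.summable_nat_rpow.2 (by linarith : -σ < -1))

theorem norm_riemannZeta_le {s : ℂ} {σ : ℝ} (hσ : 1 < σ) (hs : σ ≤ s.re) :
    ‖riemannZeta s‖ ≤ ∑' k : ℕ, ((k : ℝ) + 1) ^ (-σ) := by
  rw [← (hasSum_nat_add_one_cpow_neg (hσ.trans_le hs)).tsum_eq]
  refine tsum_of_norm_bounded (summable_nat_add_one_rpow_neg hσ).hasSum fun k ↦ ?_
  rw [norm_nat_add_one_cpow, Complex.neg_re]
  exact rpow_le_rpow_of_exponent_le (by simp) (by linarith)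

theorem natCast_div_two_cpow_neg (m : ℕ) (s : ℂ) :
    ((m : ℂ) / 2) ^ (-s) = 2 ^ s * (m : ℂ) ^ (-s) := by
  have := Complex.mul_cpow_ofReal_nonneg (inv_nonneg.2 zero_le_two) m.cast_nonneg (-s)
  push_cast at this
  rw [div_eq_inv_mul, this, Complex.inv_cpow _ _ (by simp [pi_ne_zero.symm]),
    Complex.cpow_neg, inv_inv]

theorem hasSum_nat_add_half_cpow_neg {s : ℂ} (hs : 1 < s.re) :
    HasSum (fun k : ℕ ↦ ((k : ℂ) + 1 / 2) ^ (-s)) ((2 ^ s - 1) * riemannZeta s) := by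
  have all : HasSum (fun m : ℕ ↦ (((m : ℂ) + 1) / 2) ^ (-s)) (2 ^ s * riemannZeta s) := by
    refine ((hasSum_nat_add_one_cpow_neg hs).mul_left (2 ^ s)).congr_fun fun m ↦ ?_
    exact_mod_cast natCast_div_two_cpow_neg (m + 1) s
  have hodd : Summable fun k : ℕ ↦ ((k : ℂ) + 1 / 2) ^ (-s) := by
    refine (all.summable.comp_injective (mul_right_injective₀ (two_ne_zero' ℕ))).congr fun k ↦ ?_
    simp [add_div]
  have even_index : HasSum (fun k : ℕ ↦ (((2 * k : ℕ) + 1 : ℂ) / 2) ^ (-s))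
      (∑' k : ℕ, ((k : ℂ) + 1 / 2) ^ (-s)) := by
    simpa [add_div] using hodd.hasSum
  have odd_index : HasSum (fun k : ℕ ↦ (((2 * k + 1 : ℕ) + 1 : ℂ) / 2) ^ (-s)) (riemannZeta s) := by
    refine (hasSum_nat_add_one_cpow_neg hs).congr_fun fun k ↦ ?_
    congr 1; push_cast; ring
  have := (HasSum.even_add_odd (f := fun m : ℕ ↦ (((m : ℂ) + 1) / 2) ^ (-s))
    even_index odd_index).unique all
  rw [sub_one_mul, ← eq_sub_of_add_eq this]
  exact hodd.hasSum

theorem hasSum_nat_add_one_sub_cpow_neg (s : ℂ) {x : ℝ} (hx : |x| < 1) (k : ℕ) :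
    HasSum (fun n : ℕ ↦ Ring.multichoose s n * x ^ n * ((k : ℂ) + 1) ^ (-(s + n)))
      (((k : ℂ) + 1 - x) ^ (-s)) := by
  have hk : (k : ℂ) + 1 ≠ 0 := Nat.cast_add_one_ne_zero k
  have hpos : (0 : ℝ) < k + 1 := k.cast_add_one_pos
  have hz : |x / (k + 1)| < 1 := by
    rw [abs_div, abs_of_pos hpos, div_lt_one hpos]
    exact hx.trans_le (by simp)
  have hxk : 0 ≤ 1 - x / (k + 1) := by linarith [(abs_lt.1 hz).2]
  have factor : ((k : ℂ) + 1 - x) ^ (-s) = (k + 1) ^ (-s) * (1 - (x / (k + 1) : ℝ)) ^ (-s) := by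
    have := Complex.mul_cpow_ofReal_nonneg hpos.le hxk (-s)
    push_cast at this ⊢
    rw [← this]
    congr 1
    field_simp
  rw [factor]
  have := (hasSum_multichoose_mul_pow s (z := (x / (k + 1) : ℝ))
    (by rwa [Complex.norm_real])).mul_left (((k : ℂ) + 1) ^ (-s))
  refine this.congr_fun fun n ↦ ?_
  rw [neg_add, ← sub_eq_add_neg, Complex.cpow_sub _ _ hk, Complex.cpow_natCast]
  push_cast
  rw [div_pow]
  ring

theorem summable_multichoose_mul_nat_add_one_cpow {s : ℂ} (hs : 1 < s.re) {x : ℝ}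
    (hx : |x| < 1) :
    Summable fun p : ℕ × ℕ ↦
      Ring.multichoose s p.1 * x ^ p.1 * ((p.2 : ℂ) + 1) ^ (-(s + p.1)) := by
  refine .of_norm_bounded (Summable.mul_of_nonneg
    (summable_multichoose_mul_pow ‖s‖ (x := |x|) (by simpa using hx))
    (summable_nat_add_one_rpow_neg hs) (fun n ↦ ?_) fun k ↦ ?_) fun p ↦ ?_
  · have := multichoose_nonneg (norm_nonneg s) n
    positivity
  · positivity
  · have hre : (-(s + p.1 : ℂ)).re ≤ -s.re := by simp
    have := multichoose_nonneg (norm_nonneg s) p.1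
    simp only [norm_mul, norm_pow, Complex.norm_real, Real.norm_eq_abs, norm_nat_add_one_cpow]
    gcongr
    · exact norm_multichoose_le le_rfl p.1
    · simp

theorem hasSum_multichoose_mul_riemannZeta {s : ℂ} (hs : 1 < s.re) {x : ℝ} (hx : |x| < 1) :
    HasSum (fun n : ℕ ↦ Ring.multichoose s n * riemannZeta (s + n) * (x : ℂ) ^ n)
      (∑' k : ℕ, ((k : ℂ) + 1 - x) ^ (-s)) := by
  have hF := (summable_multichoose_mul_nat_add_one_cpow hs hx).hasSum
  have by_base := ((Equiv.prodComm ℕ ℕ).hasSum_iff.2 hF).prod_fiberwise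
    (hasSum_nat_add_one_sub_cpow_neg s hx)
  rw [by_base.tsum_eq]
  refine hF.prod_fiberwise fun n ↦ ?_
  have hsn : 1 < (s + n : ℂ).re := by
    simpa using hs.trans_le (le_add_of_nonneg_right n.cast_nonneg)
  simpa only [mul_right_comm] using
    (hasSum_nat_add_one_cpow_neg hsn).mul_left (Ring.multichoose s n * (x : ℂ) ^ n)

theorem hasSum_even_terms {c : ℕ → ℂ} {x a b : ℂ} (ha : HasSum (fun n ↦ c n * x ^ n) a)
    (hb : HasSum (fun n ↦ c n * (-x) ^ n) b) :
    HasSum (fun n ↦ c (2 * n) * x ^ (2 * n)) ((a + b) / 2) := by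
  have h := (ha.add hb).div_const 2
  rw [← (mul_right_injective₀ (two_ne_zero' ℕ)).hasSum_iff] at h
  · refine h.congr_fun fun n ↦ ?_
    simp [pow_mul]
  · intro n hn
    have : Odd n := by
      rw [← Nat.not_even_iff_odd]
      rintro ⟨m, rfl⟩
      exact hn ⟨m, two_mul m⟩
    simp [this.neg_pow]

end ZetaSeries

section EvenTail

open Filter Topology ZetaAsymptotics

/-- The term of degree `2 * n` in the expansion of `∑ₖ (k + 1 - x) ^ (-s)` in powers of `x`; the
terms of even degree expand the average of its values at `x` and `-x`. -/
noncomputable def evenTerm (x : ℂ) (n : ℕ) (s : ℂ) : ℂ :=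
  Ring.multichoose s (2 * n) * riemannZeta (s + (2 * n : ℕ)) * x ^ (2 * n)

/-- The sum of the even terms of degree at least `2 * N`, which for `‖x‖ < 1` continues analytically
to the half-plane `1 - 2 * N < re s` because the terms with a pole there have been left out. -/
noncomputable def evenTail (N : ℕ) (x s : ℂ) : ℂ :=
  ∑' n, evenTerm x (n + N) s

theorem differentiableAt_evenTerm (x : ℂ) {n : ℕ} {s : ℂ} (hs : 1 - 2 * n < s.re) :
    DifferentiableAt ℂ (evenTerm x n) s := by
  have hre : 1 < (s + (2 * n : ℕ)).re := by
    rw [Complex.add_re, Complex.natCast_re]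
    push_cast
    linarith
  have hne := ne_one_of_one_lt_re hre
  have hζ : DifferentiableAt ℂ (fun w ↦ riemannZeta (w + (2 * n : ℕ))) s :=
    ((differentiableAt_riemannZeta hne).hasDerivAt.comp_add_const s _).differentiableAt
  exact ((differentiable_multichoose (2 * n) s).mul hζ).mul_const _

theorem norm_evenTerm_le (x : ℂ) {n : ℕ} {s : ℂ} {σ R : ℝ} (hσ : 1 < σ) (hs : σ - 2 * n ≤ s.re)
    (hR : ‖s‖ ≤ R) :
    ‖evenTerm x n s‖ ≤
      Ring.multichoose R (2 * n) * ‖x‖ ^ (2 * n) * ∑' k : ℕ, ((k : ℝ) + 1) ^ (-σ) := by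
  have hζ : ‖riemannZeta (s + (2 * n : ℕ))‖ ≤ ∑' k : ℕ, ((k : ℝ) + 1) ^ (-σ) :=
    norm_riemannZeta_le hσ (by simp only [Complex.add_re, Complex.natCast_re]; push_cast; linarith)
  have := multichoose_nonneg ((norm_nonneg s).trans hR) (2 * n)
  rw [evenTerm, norm_mul, norm_mul, norm_pow, mul_right_comm]
  gcongr
  exact norm_multichoose_le hR _

theorem exists_isOpen_norm_evenTerm_le {N : ℕ} {x s : ℂ} (hx : ‖x‖ < 1) (hs : 1 - 2 * N < s.re) :
    ∃ U : Set ℂ, IsOpen U ∧ s ∈ U ∧ U ⊆ {w | 1 - 2 * N < w.re} ∧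
      ∃ u : ℕ → ℝ, Summable u ∧ ∀ n, ∀ w ∈ U, ‖evenTerm x (n + N) w‖ ≤ u n := by
  obtain ⟨τ, hτ, hτs⟩ := exists_between hs
  have hσ : 1 < τ + 2 * N := by linarith
  refine ⟨{w | τ < w.re} ∩ Metric.ball 0 (‖s‖ + 1),
    (isOpen_lt continuous_const Complex.continuous_re).inter Metric.isOpen_ball,
    ⟨hτs, by simp⟩, fun w hw ↦ hτ.trans hw.1, _, Summable.mul_right _ ?_,
    fun n w hw ↦ norm_evenTerm_le x hσ ?_ (mem_ball_zero_iff.1 hw.2).le⟩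
  · have inj : Function.Injective fun n : ℕ ↦ 2 * (n + N) := fun a b h ↦ by simpa using h
    exact (summable_multichoose_mul_pow (‖s‖ + 1) (by simpa using hx)).comp_injective inj
  · have hτw : τ < w.re := hw.1
    push_cast
    linarith [n.cast_nonneg (α := ℝ)]

theorem differentiableOn_evenTerm_add (N : ℕ) (x : ℂ) (n : ℕ) :
    DifferentiableOn ℂ (evenTerm x (n + N)) {s | 1 - 2 * N < s.re} := fun s hs ↦ by
  have hs' : 1 - 2 * N < s.re := hs
  refine (differentiableAt_evenTerm x ?_).differentiableWithinAt
  push_cast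
  linarith [n.cast_nonneg (α := ℝ)]

theorem differentiableOn_evenTail (N : ℕ) {x : ℂ} (hx : ‖x‖ < 1) :
    DifferentiableOn ℂ (evenTail N x) {s | 1 - 2 * N < s.re} := fun s hs ↦ by
  obtain ⟨U, hU, hsU, hUN, u, hu, hbound⟩ := exists_isOpen_norm_evenTerm_le hx hs
  have := Complex.differentiableOn_tsum_of_summable_norm hu
    (fun n ↦ (differentiableOn_evenTerm_add N x n).mono hUN) hU hbound
  exact (this.differentiableAt (hU.mem_nhds hsU)).differentiableWithinAt

theorem hasSum_deriv_evenTerm {N : ℕ} {x s : ℂ} (hx : ‖x‖ < 1) (hs : 1 - 2 * N < s.re) :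
    HasSum (fun n ↦ deriv (evenTerm x (n + N)) s) (deriv (evenTail N x) s) := by
  obtain ⟨U, hU, hsU, hUN, u, hu, hbound⟩ := exists_isOpen_norm_evenTerm_le hx hs
  exact Complex.hasSum_deriv_of_summable_norm hu
    (fun n ↦ (differentiableOn_evenTerm_add N x n).mono hUN) hU hbound hsU

theorem deriv_evenTerm_neg_one (x : ℂ) (n : ℕ) :
    deriv (evenTerm x (n + 2)) (-1) =
      -riemannZeta (2 * n + 3) * x ^ (2 * n + 4) / ((2 * n + 3) * (2 * n + 4)) := by
  have hcoeff := hasDerivAt_multichoose_add_two_neg_one (𝕜 := ℂ) (2 * n + 2)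
  have hre : 1 < (-1 + (2 * n + 4 : ℕ) : ℂ).re := by
    rw [Complex.add_re, Complex.natCast_re]
    push_cast
    simp only [Complex.neg_re, Complex.one_re]
    linarith [n.cast_nonneg (α := ℝ)]
  have hne := ne_one_of_one_lt_re hre
  have hζ := (differentiableAt_riemannZeta hne).hasDerivAt.comp_add_const
  refine ((hcoeff.mul hζ).mul_const (x ^ (2 * n + 4))).deriv.trans ?_
  rw [multichoose_neg_one_add_two, show (-1 + (2 * n + 4 : ℕ) : ℂ) = 2 * n + 3 by push_cast; ring]
  push_cast
  ring

theorem sub_one_mul_riemannZeta {s : ℂ} (hs : s ≠ 1) :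
    (s - 1) * riemannZeta s = riemannZeta₁ s := by
  rw [riemannZeta_eq_inv_sub_mul hs, mul_inv_cancel_left₀ (sub_ne_zero.2 hs)]

theorem hasSum_evenTerm_half {s : ℂ} (hs : 1 < s.re) :
    HasSum (fun n ↦ evenTerm (1 / 2) n s) ((2 ^ s - 1) * riemannZeta s - 2 ^ (s - 1)) := by
  have half : HasSum (fun k : ℕ ↦ ((k : ℂ) + 1 - (1 / 2 : ℝ)) ^ (-s))
      ((2 ^ s - 1) * riemannZeta s) := by
    refine (hasSum_nat_add_half_cpow_neg hs).congr_fun fun k ↦ ?_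
    congr 1; push_cast; ring
  have three_halves : HasSum (fun k : ℕ ↦ ((k : ℂ) + 1 - (-(1 / 2) : ℝ)) ^ (-s))
      ((2 ^ s - 1) * riemannZeta s - 2 ^ s) := by
    have := (hasSum_nat_add_iff' 1).2 (hasSum_nat_add_half_cpow_neg hs)
    have h2 : ((1 / 2 : ℂ)) ^ (-s) = 2 ^ s := by
      simpa using natCast_div_two_cpow_neg 1 s
    simp only [Finset.range_one, Finset.sum_singleton, Nat.cast_zero, zero_add, h2] at this
    refine this.congr_fun fun k ↦ ?_
    congr 1; push_cast; ring
  have pos := hasSum_multichoose_mul_riemannZeta hs (x := 1 / 2) (by norm_num [abs_lt])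
  have neg := hasSum_multichoose_mul_riemannZeta hs (x := -(1 / 2)) (by norm_num [abs_lt])
  rw [half.tsum_eq] at pos
  rw [three_halves.tsum_eq] at neg
  push_cast at pos neg
  simp only [evenTerm]
  convert hasSum_even_terms pos neg using 1
  rw [Complex.cpow_sub _ _ two_ne_zero, Complex.cpow_one]
  ring

theorem evenTail_two_half_of_one_lt_re {s : ℂ} (hs : 1 < s.re) :
    evenTail 2 (1 / 2) s = (2 ^ s - 2) * riemannZeta s - 2 ^ (s - 1) -
      s / 8 * riemannZeta₁ (s + 2) := by
  have hs2 : s + 2 ≠ 1 := by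
    refine ne_one_of_one_lt_re ?_
    rw [Complex.add_re, Complex.re_ofNat]
    linarith
  have hcoeff : Ring.multichoose s 2 = s * (s + 1) / 2 := by
    rw [multichoose_succ_eq_mul_div]
    norm_num
  have := (hasSum_nat_add_iff' 2).2 (hasSum_evenTerm_half hs)
  refine this.tsum_eq.trans ?_
  rw [← sub_one_mul_riemannZeta hs2]
  simp only [evenTerm, Finset.sum_range_succ, Finset.sum_range_zero, mul_zero, mul_one,
    Ring.multichoose_zero_right, hcoeff, Nat.cast_zero, Nat.cast_ofNat, add_zero, zero_add,
    pow_zero]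
  ring

-- The factor `s - 1` clears the pole at `1`, so that both sides are holomorphic on a half-plane and
-- the identity theorem applies.
theorem sub_one_mul_evenTail_two_half {s : ℂ} (hs : -3 < s.re) :
    (s - 1) * evenTail 2 (1 / 2) s = (2 ^ s - 2) * riemannZeta₁ s - (s - 1) * 2 ^ (s - 1) -
      s * (s - 1) / 8 * riemannZeta₁ (s + 2) := by
  let U : Set ℂ := {s | -3 < s.re}
  have hU : IsOpen U := isOpen_lt continuous_const Complex.continuous_re
  have hpow (c : ℂ) : Differentiable ℂ fun s : ℂ ↦ (2 : ℂ) ^ (s - c) := fun s ↦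
    DifferentiableAt.const_cpow (by fun_prop) (.inl two_ne_zero)
  have hleft : DifferentiableOn ℂ (fun s ↦ (s - 1) * evenTail 2 (1 / 2) s) U := by
    refine .mul (by fun_prop) ((differentiableOn_evenTail 2 (by norm_num)).mono fun s hs ↦ ?_)
    have hs' : -3 < s.re := hs
    change 1 - 2 * ((2 : ℕ) : ℝ) < s.re
    push_cast
    linarith
  have hright : Differentiable ℂ fun s ↦ (2 ^ s - 2) * riemannZeta₁ s - (s - 1) * 2 ^ (s - 1) -
      s * (s - 1) / 8 * riemannZeta₁ (s + 2) := by
    have hpow_zero : Differentiable ℂ fun s : ℂ ↦ (2 : ℂ) ^ s := by simpa using hpow 0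
    have hζ₁ : Differentiable ℂ fun s ↦ riemannZeta₁ (s + 2) :=
      differentiable_riemannZeta₁.comp (f := (· + 2)) (by fun_prop)
    exact (((hpow_zero.sub_const 2).mul differentiable_riemannZeta₁).sub
      (.mul (by fun_prop) (hpow 1))).sub (.mul (by fun_prop) hζ₁)
  refine (hleft.analyticOnNhd hU).eqOn_of_preconnected_of_eventuallyEq
    (hright.differentiableOn.analyticOnNhd hU) (convex_halfSpace_re_gt _).isPreconnected
    (show (2 : ℂ) ∈ U by norm_num [U]) ?_ hs
  filter_upwards [(isOpen_lt continuous_const Complex.continuous_re).mem_nhds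
    (show (2 : ℂ) ∈ {s : ℂ | 1 < s.re} by simp)] with s hs
  rw [evenTail_two_half_of_one_lt_re hs, ← sub_one_mul_riemannZeta (ne_one_of_one_lt_re hs)]
  ring

theorem evenTail_two_half {s : ℂ} (hs : -3 < s.re) (hs1 : s ≠ 1) :
    evenTail 2 (1 / 2) s = (2 ^ s - 2) * riemannZeta s - 2 ^ (s - 1) -
      s / 8 * riemannZeta₁ (s + 2) := by
  apply mul_left_cancel₀ (sub_ne_zero.2 hs1)
  rw [sub_one_mul_evenTail_two_half hs, ← sub_one_mul_riemannZeta hs1]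
  ring

theorem riemannZeta_neg_one : riemannZeta (-1) = -1 / 12 := by
  have := riemannZeta_neg_nat_eq_bernoulli 1
  rw [Nat.cast_one, one_add_one_eq_two, bernoulli_two] at this
  rw [this]
  norm_num

theorem deriv_evenTail_two_half_neg_one :
    deriv (evenTail 2 (1 / 2)) (-1) = -(12 * deriv riemannZeta (-1) + 1 -
      eulerMascheroniConstant + 7 / 3 * Real.log 2) / 8 := by
  have hpow : HasDerivAt (fun s : ℂ ↦ (2 : ℂ) ^ s) (1 / 2 * Real.log 2) (-1) := by
    refine ((hasDerivAt_id (-1 : ℂ)).const_cpow (.inl two_ne_zero)).congr_deriv ?_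
    simp [Complex.cpow_neg_one]
  have hpow' : HasDerivAt (fun s : ℂ ↦ (2 : ℂ) ^ (s - 1)) (1 / 4 * Real.log 2) (-1) := by
    refine (((hasDerivAt_id (-1 : ℂ)).sub_const 1).const_cpow (.inl two_ne_zero)).congr_deriv ?_
    rw [show (id (-1) - 1 : ℂ) = -(2 : ℕ) by norm_num, Complex.cpow_neg, Complex.cpow_natCast]
    norm_num [Complex.ofReal_log]
  have hζ : HasDerivAt riemannZeta (deriv riemannZeta (-1)) (-1) :=
    (differentiableAt_riemannZeta (by norm_num)).hasDerivAt
  have hζ₁ : HasDerivAt (fun s ↦ riemannZeta₁ (s + 2)) (eulerMascheroniConstant : ℂ) (-1) := by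
    apply HasDerivAt.comp_add_const
    rw [show (-1 + 2 : ℂ) = 1 by norm_num, ← deriv_riemannZeta₁_one]
    exact (differentiable_riemannZeta₁ 1).hasDerivAt
  have closed_form : evenTail 2 (1 / 2) =ᶠ[𝓝 (-1)] fun s ↦
      (2 ^ s - 2) * riemannZeta s - 2 ^ (s - 1) - s / 8 * riemannZeta₁ (s + 2) := by
    filter_upwards [(isOpen_lt continuous_const Complex.continuous_re).mem_nhds
      (show (-1 : ℂ) ∈ {s : ℂ | -3 < s.re} by norm_num),
      isOpen_ne.mem_nhds (show (-1 : ℂ) ≠ 1 by norm_num)] with s hs hs1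
    exact evenTail_two_half hs hs1
  rw [closed_form.deriv_eq]
  refine ((((hpow.sub_const 2).mul hζ).sub hpow').sub
    (((hasDerivAt_id (-1 : ℂ)).div_const 8).mul hζ₁)).deriv.trans ?_
  simp only [id_eq]
  rw [riemannZeta_neg_one, Complex.cpow_neg_one, show (-1 + 2 : ℂ) = 1 by norm_num,
    riemannZeta₁_one]
  ring

theorem riemannZeta_odd_div_eq_deriv_evenTerm (n : ℕ) :
    riemannZeta (2 * (n + 1) + 1) / ((2 * n + 3) * (n + 2) * 4 ^ (n + 1)) =
      -8 * deriv (evenTerm (1 / 2) (n + 2)) (-1) := by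
  have h3 : (2 * n + 3 : ℂ) ≠ 0 := by exact_mod_cast (2 * n + 2).succ_ne_zero
  have h2 : (n + 2 : ℂ) ≠ 0 := by exact_mod_cast (n + 1).succ_ne_zero
  have hpow : (1 / 2 : ℂ) ^ (2 * n + 4) = 1 / (4 * 4 ^ (n + 1)) := by
    rw [show 2 * n + 4 = 2 * (n + 2) by ring, pow_mul, one_div_pow, one_div_pow, ← pow_succ',
      show (2 : ℂ) ^ 2 = 4 by norm_num]
  rw [deriv_evenTerm_neg_one, hpow, show (2 * (n + 1) + 1 : ℂ) = 2 * n + 3 by ring,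
    show (2 * n + 4 : ℂ) = 2 * (n + 2) by ring]
  field_simp
  ring

theorem hasSum_riemannZeta_odd_div :
    HasSum (fun n : ℕ ↦ riemannZeta (2 * (n + 1) + 1) / ((2 * n + 3) * (n + 2) * 4 ^ (n + 1)))
      (12 * deriv riemannZeta (-1) + 1 - eulerMascheroniConstant + 7 / 3 * Real.log 2) := by
  have hsum := (hasSum_deriv_evenTerm (N := 2) (x := 1 / 2) (s := -1)
    (by norm_num) (by norm_num)).mul_left (-8)
  simp only [← riemannZeta_odd_div_eq_deriv_evenTerm, deriv_evenTail_two_half_neg_one] at hsum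
  rwa [neg_div, neg_mul_neg, mul_div_cancel₀ _ (by norm_num)] at hsum

end EvenTail

theorem stmt18 (A : ℝ)
    (hA : (Real.log A : ℂ) = 1 / 12 - deriv riemannZeta (-1)) :
    ∑' n : ℕ, riemannZeta (2 * (n + 1) + 1) / ((2 * n + 3) * (n + 2) * 4 ^ (n + 1)) =
      ((-12 * Real.log A + 2 - Real.eulerMascheroniConstant +
        (7 / 3) * Real.log 2 : ℝ) : ℂ) := by
  rw [hasSum_riemannZeta_odd_div.tsum_eq]
  push_cast
  rw [hA]
  ring
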